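/- For every β ≥ 0, c ≥ 0 and N ∈ ℕ, the quenched pressure is bounded above by the annealed pressure: p_N(β,c) ≤ 𝒫(β,c). -/

import Mathlib

open MeasureTheory Filter

/-- Poisson probability mass function with parameter `lam`. -/
noncomputable def poissonPMF (lam : ℝ) (k : ℕ) : ℝ :=
  Real.exp (-lam) * lam ^ k / (Nat.factorial k)

/-- Potts Hamiltonian `H_N(σ, J) = Σ_{i,j} J_{ij} δ(σ_i, σ_j)`. -/
noncomputable def potts.H (q N : ℕ) (σ : Fin N → Fin q) (J : Fin N → Fin N → ℝ) : ℝ :=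
  ∑ i, ∑ j, J i j * (if σ i = σ j then (1 : ℝ) else 0)

/-- Partition function `Z_N(J)`. -/
noncomputable def potts.Z (q N : ℕ) (J : Fin N → Fin N → ℝ) : ℝ :=
  ∑ σ : Fin N → Fin q, Real.exp (- potts.H q N σ J)

/-- Expectation over the Poissonian disorder: the entries `J_{ij}` are independent
Poisson random variables with means `c_{ij} / (2N)`. -/
noncomputable def potts.E (N : ℕ) (c : Fin N → Fin N → ℝ)
    (g : (Fin N → Fin N → ℕ) → ℝ) : ℝ :=
  ∑' J : Fin N → Fin N → ℕ,
    (∏ i, ∏ j, poissonPMF (c i j / (2 * N)) (J i j)) * g J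

/-- Quenched pressure for a general nonnegative connectivity matrix `c`. -/
noncomputable def potts.pmat (q N : ℕ) (β : ℝ) (c : Fin N → Fin N → ℝ) : ℝ :=
  potts.E N c (fun J => (1 / N) * Real.log (potts.Z q N (fun i j => β * (J i j : ℝ))))

/-- Quenched pressure for the constant connectivity matrix `c_{ij} ≡ c`. -/
noncomputable def potts.p (q N : ℕ) (β c : ℝ) : ℝ :=
  potts.pmat q N β (fun _ _ => c)

/-- Annealed pressure `𝒫(β, c) = ln q + (c/2) ln(1 - (1 - e^{-β})/q)`. -/
noncomputable def potts.annealed (q : ℕ) (β c : ℝ) : ℝ :=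
  Real.log q + (c / 2) * Real.log (1 - (1 - Real.exp (-β)) / q)

theorem aux_congr {ι : Type} {f g : ι → ℝ} {a b : ℝ} (h : HasSum f a)
    (hfg : ∀ x, g x = f x) (hab : b = a) : HasSum g b := by
  rw [hab, funext hfg]; exact h

theorem aux_hasSum_pi {α : Type} (n : ℕ) (f : Fin n → α → ℝ) (a : Fin n → ℝ)
    (h0 : ∀ i x, 0 ≤ f i x) (hf : ∀ i, HasSum (f i) (a i)) :
    HasSum (fun x : Fin n → α => ∏ i, f i (x i)) (∏ i, a i) := by
  induction n with
  | zero =>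
    simp only [Finset.univ_eq_empty, Finset.prod_empty]
    convert hasSum_fintype (fun _ : Fin 0 → α => (1:ℝ)) using 1
    simp
  | succ n ih =>
    have h1 := ih (fun i => f i.succ) (fun i => a i.succ) (fun i x => h0 _ _) (fun i => hf _)
    have hs := (hf 0).summable.mul_of_nonneg h1.summable (fun x => h0 _ _)
      (fun x => Finset.prod_nonneg fun i _ => h0 _ _)
    have h2 := (hf 0).mul h1 hs
    rw [Fin.prod_univ_succ, ← (Fin.consEquiv (fun _ : Fin (n+1) => α)).hasSum_iff]
    refine aux_congr h2 (fun p => ?_) rfl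
    simp [Fin.prod_univ_succ]

theorem aux_pmf_nonneg (lam : ℝ) (h : 0 ≤ lam) (k : ℕ) : 0 ≤ poissonPMF lam k := by
  unfold poissonPMF; positivity

theorem aux_pmf_gen (lam x : ℝ) :
    HasSum (fun k => poissonPMF lam k * x ^ k) (Real.exp (lam * (x - 1))) := by
  have h := (NormedSpace.expSeries_div_hasSum_exp (lam * x)).mul_left (Real.exp (-lam))
  rw [← Real.exp_eq_exp_ℝ, ← Real.exp_add] at h
  refine aux_congr h (fun k => ?_) ?_
  · unfold poissonPMF
    rw [mul_pow]; ring
  · ring_nf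

theorem aux_pmf_one (lam : ℝ) : HasSum (poissonPMF lam) 1 := by
  simpa using aux_pmf_gen lam 1

theorem aux_pmf_mean (lam : ℝ) :
    HasSum (fun k => poissonPMF lam k * (k:ℝ)) lam := by
  rw [← hasSum_nat_add_iff' 1]
  refine aux_congr ((aux_pmf_one lam).mul_left lam) (fun k => ?_) ?_
  · unfold poissonPMF
    rw [Nat.factorial_succ]
    push_cast
    field_simp
    ring
  · simp

theorem aux_gen (N : ℕ) (lam : ℝ) (h : 0 ≤ lam) (x : Fin N → Fin N → ℝ) (hx : ∀ i j, 0 ≤ x i j) :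
    HasSum (fun J : Fin N → Fin N → ℕ =>
      (∏ i, ∏ j, poissonPMF lam (J i j)) * ∏ i, ∏ j, x i j ^ J i j)
      (Real.exp (∑ i, ∑ j, lam * (x i j - 1))) := by
  have hn : ∀ i j k, 0 ≤ poissonPMF lam k * x i j ^ k := fun i j k =>
    mul_nonneg (aux_pmf_nonneg lam h k) (pow_nonneg (hx i j) k)
  have := aux_hasSum_pi N (fun i (y : Fin N → ℕ) => ∏ j, (poissonPMF lam (y j) * x i j ^ y j))
    (fun i => ∏ j, Real.exp (lam * (x i j - 1)))
    (fun i y => Finset.prod_nonneg fun j _ => hn _ _ _)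
    (fun i => aux_hasSum_pi N (fun j k => poissonPMF lam k * x i j ^ k) _
      (fun j k => hn _ _ _) (fun j => aux_pmf_gen lam _))
  simpa only [Real.exp_sum, Finset.prod_mul_distrib] using this

theorem aux_mean1 (N : ℕ) (lam : ℝ) (h : 0 ≤ lam) (a b : Fin N) :
    HasSum (fun J : Fin N → Fin N → ℕ =>
      (∏ i, ∏ j, poissonPMF lam (J i j)) * (J a b : ℝ)) lam := by
  have hn : ∀ i j (k : ℕ), 0 ≤ poissonPMF lam k * (if i = a then if j = b then (k:ℝ) else 1 else 1) :=
    fun i j k => mul_nonneg (aux_pmf_nonneg lam h k) (by split_ifs <;> positivity)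
  have := aux_hasSum_pi N (fun i (y : Fin N → ℕ) => ∏ j, (poissonPMF lam (y j) *
      (if i = a then if j = b then (y j:ℝ) else 1 else 1)))
    (fun i => ∏ j, (if i = a then if j = b then lam else 1 else 1))
    (fun i y => Finset.prod_nonneg fun j _ => hn _ _ _)
    (fun i => aux_hasSum_pi N (fun j k => poissonPMF lam k * 
      (if i = a then if j = b then (k:ℝ) else 1 else 1)) _
      (fun j k => hn _ _ _) (fun j => by
        split_ifs
        · exact aux_pmf_mean lam
        · simpa using aux_pmf_one lam
        · simpa using aux_pmf_one lam))
  have e : ∀ g : Fin N → Fin N → ℝ,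
      ∏ i, ∏ j, (if i = a then if j = b then g i j else 1 else 1) = g a b := by
    intro g
    rw [Finset.prod_eq_single a, Finset.prod_eq_single b] <;> simp +contextual
  simp only [Finset.prod_mul_distrib] at this
  rw [e (fun _ _ => lam)] at this
  refine aux_congr this (fun J => ?_) rfl
  congr 1
  exact (e (fun i j => (J i j : ℝ))).symm

theorem aux_mean (N : ℕ) (lam : ℝ) (h : 0 ≤ lam) :
    HasSum (fun J : Fin N → Fin N → ℕ =>
      (∏ i, ∏ j, poissonPMF lam (J i j)) * ((∑ i, ∑ j, J i j : ℕ) : ℝ)) (N * (N * lam)) := by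
  have := hasSum_sum (s := Finset.univ) (fun (i : Fin N) _ =>
    hasSum_sum (s := Finset.univ) (fun (j : Fin N) _ => aux_mean1 N lam h i j))
  refine aux_congr this (fun J => ?_) ?_
  · push_cast
    simp only [Finset.mul_sum]
  · simp

theorem aux_cs (q N : ℕ) (σ : Fin N → Fin q) :
    (N:ℝ)^2 ≤ q * ∑ i, ∑ j, (if σ i = σ j then (1:ℝ) else 0) := by
  have h := sq_sum_le_card_mul_sum_sq (s := (Finset.univ : Finset (Fin q)))
    (f := fun a => ∑ i, (if σ i = a then (1:ℝ) else 0))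
  have e1 : ∑ a, ∑ i, (if σ i = a then (1:ℝ) else 0) = N := by
    rw [Finset.sum_comm]; simp
  have e2 : ∑ a, (∑ i, (if σ i = a then (1:ℝ) else 0))^2
      = ∑ i, ∑ j, (if σ i = σ j then (1:ℝ) else 0) := by
    simp only [sq, Finset.sum_mul_sum]
    rw [Finset.sum_comm]
    refine Finset.sum_congr rfl fun i _ => ?_
    rw [Finset.sum_comm]
    refine Finset.sum_congr rfl fun j _ => ?_
    simp [eq_comm]
  rw [e1, e2] at h
  simpa using h

theorem statement4 (q N : ℕ) (hq : 2 ≤ q) (hN : 0 < N) (β c : ℝ)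
    (hβ : 0 ≤ β) (hc : 0 ≤ c) :
    potts.p q N β c ≤ potts.annealed q β c := by
  unfold potts.p potts.pmat potts.E potts.annealed
  have hq2 : (2:ℝ) ≤ q := by exact_mod_cast hq
  have hq0 : (0:ℝ) < q := by linarith
  have hN0 : (0:ℝ) < N := by exact_mod_cast hN
  set lam : ℝ := c / (2 * N) with hlam
  have hl : 0 ≤ lam := by positivity
  set r : ℝ := 1 - (1 - Real.exp (-β)) / q with hr
  have heβ : Real.exp (-β) ≤ 1 := Real.exp_le_one_iff.2 (by linarith)
  have hr0 : 0 < r := by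
    have : (1 - Real.exp (-β)) / q < 1 := by
      rw [div_lt_one hq0]; have := Real.exp_pos (-β); linarith
    linarith
  set W : (Fin N → Fin N → ℕ) → ℝ := fun J => ∏ i, ∏ j, poissonPMF lam (J i j) with hW
  have hW0 : ∀ J, 0 ≤ W J := fun J =>
    Finset.prod_nonneg fun i _ => Finset.prod_nonneg fun j _ => aux_pmf_nonneg lam hl _
  set K : (Fin N → Fin N → ℕ) → ℕ := fun J => ∑ i, ∑ j, J i j with hK
  set Z : (Fin N → Fin N → ℕ) → ℝ := fun J => potts.Z q N (fun i j => β * (J i j : ℝ)) with hZ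
  have s1 : HasSum W 1 := by
    have := aux_gen N lam hl (fun _ _ => 1) (by simp)
    simpa using this
  have s2 : HasSum (fun J => W J * (K J : ℝ)) (N * (N * lam)) := aux_mean N lam hl
  let x : (Fin N → Fin q) → Fin N → Fin N → ℝ := fun σ i j =>
    Real.exp (-(β * (if σ i = σ j then (1:ℝ) else 0))) / r
  have hterm : ∀ σ J, Real.exp (- potts.H q N σ (fun i j => β * (J i j : ℝ)))
      = r ^ K J * ∏ i, ∏ j, x σ i j ^ J i j := by
    intro σ J
    simp only [x, div_pow, Finset.prod_div_distrib, Finset.prod_pow_eq_pow_sum, hK]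
    rw [mul_div_cancel₀ _ (by positivity)]
    unfold potts.H
    simp only [← Real.exp_nat_mul, ← Real.exp_sum, ← Finset.sum_neg_distrib]
    congr 1
    refine Finset.sum_congr rfl fun i _ => Finset.sum_congr rfl fun j _ => ?_
    ring
  have hZeq : ∀ J, Z J = r ^ K J * ∑ σ, ∏ i, ∏ j, x σ i j ^ J i j := by
    intro J
    simp only [hZ, potts.Z, hterm, Finset.mul_sum]
  have s3 : HasSum (fun J => W J * (Z J / r ^ K J))
      (∑ σ : Fin N → Fin q, Real.exp (∑ i, ∑ j, lam * (x σ i j - 1))) := by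
    have := hasSum_sum (s := Finset.univ) (fun (σ : Fin N → Fin q) _ =>
      aux_gen N lam hl (x σ) (fun i j => by simp only [x]; positivity))
    refine aux_congr this (fun J => ?_) rfl
    rw [hZeq, mul_div_cancel_left₀ _ (by positivity), Finset.mul_sum]
  have hx : ∀ σ, Real.exp (∑ i, ∑ j, lam * (x σ i j - 1)) ≤ 1 := by
    intro σ
    rw [Real.exp_le_one_iff]
    have e : ∀ i j, lam * (x σ i j - 1) = lam * (1 / r - 1) -
        lam * (1 - Real.exp (-β)) / r * (if σ i = σ j then (1:ℝ) else 0) := by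
      intro i j
      simp only [x]
      split_ifs <;> simp <;> ring
    simp only [e, Finset.sum_sub_distrib, ← Finset.mul_sum]
    have cs := aux_cs q N σ
    set D := ∑ i, ∑ j, (if σ i = σ j then (1:ℝ) else 0)
    simp only [Finset.sum_const, Finset.card_univ, Fintype.card_fin, nsmul_eq_mul]
    have hD : (N:ℝ)^2 / q ≤ D := by rw [div_le_iff₀ hq0]; linarith
    have h1 : lam * (1 - Real.exp (-β)) / r * ((N:ℝ)^2 / q) ≤ lam * (1 - Real.exp (-β)) / r * D :=
      mul_le_mul_of_nonneg_left hD (div_nonneg (mul_nonneg hl (by linarith)) hr0.le)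
    have h2 : (N:ℝ) * (N * (lam * (1 / r - 1))) = lam * (1 - Real.exp (-β)) / r * ((N:ℝ)^2 / q) := by
      have : (1 - Real.exp (-β)) / q = 1 - r := by rw [hr]; ring
      calc (N:ℝ) * (N * (lam * (1 / r - 1))) = lam * N^2 / r * (1 - r) := by field_simp
        _ = _ := by rw [← this]; ring
    linarith
  have hqN : (0:ℝ) < (q:ℝ)^N := by positivity
  have hsum : (∑ σ : Fin N → Fin q, Real.exp (∑ i, ∑ j, lam * (x σ i j - 1))) ≤ (q:ℝ)^N := by
    calc _ ≤ ∑ σ : Fin N → Fin q, (1:ℝ) := Finset.sum_le_sum fun σ _ => hx σ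
      _ = _ := by simp
  have hZpos : ∀ J, 0 < Z J := by
    intro J
    haveI : Nonempty (Fin q) := ⟨⟨0, by omega⟩⟩
    exact Finset.sum_pos (fun σ _ => Real.exp_pos _) Finset.univ_nonempty
  have hHle : ∀ σ (J : Fin N → Fin N → ℕ),
      potts.H q N σ (fun i j => β * (J i j : ℝ)) ≤ β * K J := by
    intro σ J
    simp only [hK, potts.H]
    push_cast
    simp only [Finset.mul_sum]
    refine Finset.sum_le_sum fun i _ => Finset.sum_le_sum fun j _ => ?_
    split_ifs <;> simp; positivity
  have hlow : ∀ J, -(β * K J) ≤ Real.log (Z J) := by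
    intro J
    rw [Real.le_log_iff_exp_le (hZpos J)]
    let σ₀ : Fin N → Fin q := fun _ => ⟨0, by omega⟩
    calc _ ≤ Real.exp (- potts.H q N σ₀ (fun i j => β * (J i j : ℝ))) :=
          Real.exp_le_exp.2 (neg_le_neg (hHle _ _))
      _ ≤ _ := Finset.single_le_sum (f := fun σ => Real.exp (- potts.H q N σ (fun i j => β * (J i j : ℝ))))
          (fun σ _ => (Real.exp_pos _).le) (Finset.mem_univ σ₀)
  have hup : ∀ J, Real.log (Z J) ≤ (N * Real.log q - 1) + K J * Real.log r
      + (Z J / r ^ K J) / (q:ℝ)^N := by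
    intro J
    have hrk : 0 < r ^ K J := by positivity
    have h1 := Real.log_le_sub_one_of_pos (x := (Z J / r ^ K J) / (q:ℝ)^N)
      (div_pos (div_pos (hZpos J) hrk) hqN)
    rw [Real.log_div (div_pos (hZpos J) hrk).ne' hqN.ne', Real.log_div (hZpos J).ne' hrk.ne',
      Real.log_pow, Real.log_pow] at h1
    linarith
  have sU := (((s1.mul_right (N * Real.log q - 1)).add (s2.mul_right (Real.log r))).add
    (s3.mul_right ((q:ℝ)^N)⁻¹)).mul_right (1 / (N:ℝ))
  have hle : ∀ J, W J * (1 / N * Real.log (Z J)) ≤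
      (W J * (N * Real.log q - 1) + W J * K J * Real.log r + W J * (Z J / r ^ K J) * ((q:ℝ)^N)⁻¹)
        * (1 / (N:ℝ)) := by
    intro J
    have := mul_le_mul_of_nonneg_left (hup J) (mul_nonneg (hW0 J) (by positivity : 0 ≤ 1 / (N:ℝ)))
    refine le_trans (le_of_eq (by ring)) (this.trans (le_of_eq (by ring)))
  have sL : Summable (fun J => W J * (1 / N * Real.log (Z J))) := by
    have sl := s2.mul_right (-β * (1 / (N:ℝ)))
    have hge : ∀ J, W J * K J * (-β * (1 / (N:ℝ))) ≤ W J * (1 / N * Real.log (Z J)) := by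
      intro J
      have := mul_le_mul_of_nonneg_left (hlow J) (mul_nonneg (hW0 J) (by positivity : 0 ≤ 1 / (N:ℝ)))
      refine le_trans (le_of_eq (by ring)) (this.trans (le_of_eq (by ring)))
    have := Summable.of_nonneg_of_le (fun J => sub_nonneg.2 (hge J))
      (fun J => sub_le_sub_right (hle J) _) (sU.summable.sub sl.summable)
    simpa using this.add sl.summable
  refine (hasSum_le hle sL.hasSum sU).trans ?_
  have h1 : (∑ σ : Fin N → Fin q, Real.exp (∑ i, ∑ j, lam * (x σ i j - 1))) * ((q:ℝ)^N)⁻¹ ≤ 1 := by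
    rw [← div_eq_mul_inv, div_le_one hqN]; exact hsum
  rw [mul_one_div, div_le_iff₀ hN0]
  have h2 : (N:ℝ) * (N * lam) = N * (c / 2) := by rw [hlam]; field_simp
  rw [h2]
  linarith
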